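/- Let γ ∈ (0, 1], let s = (√((1+γ)/2), √((1−γ)/2)), let |I_s⟩ = s_1 e_0 ⊗ e_0 + s_2 e_1 ⊗ e_1 in ℂ² ⊗ ℂ², and let (U_a, U_b) be distributed according to the product Haar measure on U(2) × U(2). Then the fidelity |⟨e_0 ⊗ e_0, (U_a ⊗ U_b)I_s⟩|² has probability density (with respect to Lebesgue measure) equal almost everywhere to the function taking the value (1/γ)·ln((1+γ)/(1−γ)) for f ∈ [0, (1−γ)/2], the value (1/γ)·ln((1+γ)/(2f)) for f ∈ ((1−γ)/2, (1+γ)/2], and 0 for f ∈ ((1+γ)/2, 1]. -/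

import Mathlib

open MeasureTheory Matrix Finset
open scoped ComplexConjugate

noncomputable section

/-- Borel measurable structure on the unitary group `U(d)`. -/
instance (n : Type*) [Fintype n] [DecidableEq n] :
    MeasurableSpace (Matrix.unitaryGroup n ℂ) := borel _

instance (n : Type*) [Fintype n] [DecidableEq n] :
    BorelSpace (Matrix.unitaryGroup n ℂ) := ⟨rfl⟩

/-- The Kronecker-product action of a pair of `d × d` matrices on a bipartite vector in
`ℂ^d ⊗ ℂ^d`, identified with `Fin d × Fin d → ℂ`. -/
def kronAct {d : ℕ} (Ua Ub : Matrix (Fin d) (Fin d) ℂ) (ψ : Fin d × Fin d → ℂ) :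
    Fin d × Fin d → ℂ :=
  fun p => ∑ q : Fin d × Fin d, Ua p.1 q.1 * Ub p.2 q.2 * ψ q

/-- The standard Hermitian inner product on `ℂ^d ⊗ ℂ^d`. -/
def bipInner {d : ℕ} (x y : Fin d × Fin d → ℂ) : ℂ :=
  ∑ p : Fin d × Fin d, conj (x p) * y p

/-- The vector `|I_s⟩ = ∑ i, s i • (e i ⊗ e i)` with Schmidt coefficients `s`. -/
def schmidtVec {d : ℕ} (s : Fin d → ℝ) : Fin d × Fin d → ℂ :=
  fun p => if p.1 = p.2 then (s p.1 : ℂ) else 0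

/-- The piecewise density of the fidelity of a Haar-random locally rotated two-qubit pure
state with Schmidt coefficients `(√((1+γ)/2), √((1-γ)/2))` with respect to a fixed product
state: `(1/γ)·ln((1+γ)/(1−γ))` on `[0,(1−γ)/2]`, `(1/γ)·ln((1+γ)/(2f))` on
`((1−γ)/2,(1+γ)/2]`, and `0` elsewhere. -/
def fidDensity (γ : ℝ) : ℝ → ℝ := fun f =>
  if 0 ≤ f ∧ f ≤ (1 - γ) / 2 then (1 / γ) * Real.log ((1 + γ) / (1 - γ))
  else if (1 - γ) / 2 < f ∧ f ≤ (1 + γ) / 2 then (1 / γ) * Real.log ((1 + γ) / (2 * f))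
  else 0

/-!
The standard Gaussian measure on `ℂⁿ` is invariant under unitaries and factorizes over coordinates.
Applying a Haar-random `U` to an independent Gaussian vector `x` and conditioning on either of the
two shows that `‖U i j‖²` is distributed like `‖x i‖² / ‖x‖²`; a polar-coordinate computation gives
its tail `(1 - u) ^ (n - 1)`, so for `n = 2` it is uniform on `(0, 1)`.

Given `U_a`, the fidelity is the squared modulus of an entry of `U_b w`, where `w` has entries
`s l * U_a 0 l`. By invariance it is distributed like `‖w‖² ‖U_b 0 0‖²`, and the unit length of the
first row of `U_a` gives `‖w‖² = (1 - γ) / 2 + γ ‖U_a 0 0‖²`. The fidelity is thus the product of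
independent variables uniform on `((1 - γ) / 2, (1 + γ) / 2)` and `(0, 1)`, and integrating the
density `1 / r` of a uniform variable on `(0, r)` produces the logarithm.
-/

theorem map_withDensity_comp_of_measurePreserving {α β : Type*} [MeasurableSpace α]
    [MeasurableSpace β] {μ : Measure α} {ν : Measure β} {φ : α → β}
    (hφ : MeasurePreserving φ μ ν) {g : β → ENNReal} (hg : Measurable g) :
    (μ.withDensity (g ∘ φ)).map φ = ν.withDensity g := by
  ext A hA
  rw [Measure.map_apply hφ.measurable hA, withDensity_apply _ (hφ.measurable hA),
    withDensity_apply _ hA, ← hφ.setLIntegral_comp_preimage hA hg]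
  rfl

theorem map_prod_congr {α β β' γ : Type*} [MeasurableSpace α] [MeasurableSpace β]
    [MeasurableSpace β'] [MeasurableSpace γ] {ρ : Measure α} {ν : Measure β} {ν' : Measure β'}
    [SFinite ν] [SFinite ν'] {f : α × β → γ} {g : α × β' → γ} (hf : Measurable f)
    (hg : Measurable g)
    (h : ∀ᵐ a ∂ρ, ν.map (fun b => f (a, b)) = ν'.map (fun b => g (a, b))) :
    (ρ.prod ν).map f = (ρ.prod ν').map g := by
  ext A hA
  rw [Measure.map_apply hf hA, Measure.map_apply hg hA, Measure.prod_apply (hf hA),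
    Measure.prod_apply (hg hA)]
  refine lintegral_congr_ae (h.mono fun a ha => ?_)
  have hA' : ν.map (fun b => f (a, b)) A = ν'.map (fun b => g (a, b)) A := by rw [ha]
  rwa [Measure.map_apply (by fun_prop) hA, Measure.map_apply (by fun_prop) hA] at hA'

theorem isMulRightInvariant_of_isProbabilityMeasure {G : Type*} [Group G] [TopologicalSpace G]
    [IsTopologicalGroup G] [LocallyCompactSpace G] [MeasurableSpace G] [BorelSpace G]
    (μ : Measure G) [IsProbabilityMeasure μ] [μ.IsHaarMeasure] : μ.IsMulRightInvariant where
  map_mul_right_eq_self g := by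
    have : IsProbabilityMeasure (μ.map (· * g)) :=
      Measure.isProbabilityMeasure_map (measurable_mul_const g).aemeasurable
    exact Measure.isHaarMeasure_eq_of_isProbabilityMeasure _ _

theorem eq_restrict_volume_Ioo_zero_one {ν : Measure ℝ} [IsProbabilityMeasure ν]
    (h : ∀ u ∈ Set.Ico (0 : ℝ) 1, ν (Set.Ioi u) = ENNReal.ofReal (1 - u)) :
    ν = volume.restrict (Set.Ioo 0 1) := by
  have : IsProbabilityMeasure (volume.restrict (Set.Ioo (0 : ℝ) 1)) := ⟨by simp⟩
  have tail_ge_one {u : ℝ} (hu : 1 ≤ u) : ν (Set.Ioi u) = 0 := by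
    have tail_tendsto : Filter.Tendsto (fun v : ℝ => ENNReal.ofReal (1 - v))
        (nhdsWithin 1 (Set.Iio 1)) (nhds (ENNReal.ofReal (1 - 1))) :=
      ((ENNReal.continuous_ofReal.comp (continuous_sub_left 1)).tendsto 1).mono_left
        nhdsWithin_le_nhds
    refine le_antisymm (ge_of_tendsto (by simpa using tail_tendsto) ?_) zero_le
    filter_upwards [Ioo_mem_nhdsLT one_pos] with v hv
    rw [← h v ⟨hv.1.le, hv.2⟩]
    exact measure_mono (Set.Ioi_subset_Ioi (hv.2.le.trans hu))
  have tail (u : ℝ) : ν (Set.Ioi u) = ENNReal.ofReal (1 - max u 0) := by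
    rcases lt_or_ge u 0 with hu | hu
    · have one_le : 1 ≤ ν (Set.Ioi u) := by
        simpa [h 0 (by simp)] using measure_mono (μ := ν) (Set.Ioi_subset_Ioi hu.le)
      simpa [hu.le] using prob_le_one.antisymm one_le
    rw [max_eq_left hu]
    rcases lt_or_ge u 1 with hu' | hu'
    · exact h u ⟨hu, hu'⟩
    · rw [tail_ge_one hu', ENNReal.ofReal_of_nonpos (by linarith)]
  refine Measure.ext_of_Iic _ _ fun u => ?_
  rw [← Set.compl_Ioi, prob_compl_eq_one_sub measurableSet_Ioi,
    prob_compl_eq_one_sub measurableSet_Ioi, tail, Measure.restrict_apply measurableSet_Ioi,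
    ← Set.Ioi_inter_Iio, ← Set.inter_assoc, Set.Ioi_inter_Ioi, Set.Ioi_inter_Iio, Real.volume_Ioo]

theorem map_const_add_mul_restrict_volume_Ioo_zero_one (a : ℝ) {r : ℝ} (hr : 0 < r) :
    (volume.restrict (Set.Ioo (0 : ℝ) 1)).map (fun t => a + r * t) =
      ENNReal.ofReal r⁻¹ • volume.restrict (Set.Ioo a (a + r)) := by
  have preimage_Ioo : (fun t => a + r * t) ⁻¹' Set.Ioo a (a + r) = Set.Ioo 0 1 := by
    ext t
    simp [hr]
  have map_volume : (volume : Measure ℝ).map (fun t => a + r * t) =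
      ENNReal.ofReal r⁻¹ • volume := by
    have : (fun t => a + r * t) = (a + ·) ∘ (r * ·) := rfl
    rw [this, ← Measure.map_map (by fun_prop) (by fun_prop), Real.map_volume_mul_left hr.ne',
      Measure.map_smul, map_add_left_eq_self, abs_of_pos (inv_pos.2 hr)]
  rw [← preimage_Ioo, ← Measure.restrict_map (by fun_prop) measurableSet_Ioo, map_volume,
    Measure.restrict_smul]

theorem mconv_restrict_volume_Ioo_zero_one {ν : Measure ℝ} [SFinite ν] (hν : ∀ᵐ r ∂ν, 0 < r) :
    ν ∗ₘ volume.restrict (Set.Ioo 0 1) = (volume.restrict (Set.Ioi 0)).withDensity fun f =>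
      ∫⁻ r in Set.Ioi f, ENNReal.ofReal r⁻¹ ∂ν := by
  let k : ℝ → ℝ → ENNReal := fun r f => (Set.Ioi f).indicator (fun r => ENNReal.ofReal r⁻¹) r
  have hk : Measurable (Function.uncurry k) :=
    Measurable.ite (measurableSet_lt measurable_snd measurable_fst) (by fun_prop) measurable_const
  ext A hA
  have fiber {r : ℝ} (hr : 0 < r) : volume.restrict (Set.Ioo 0 1) ((r * ·) ⁻¹' A) =
      ∫⁻ f in A, k r f ∂volume.restrict (Set.Ioi 0) := by
    have h := map_const_add_mul_restrict_volume_Ioo_zero_one 0 hr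
    simp only [zero_add] at h
    have k_eq : k r = (Set.Iio r).indicator fun _ => ENNReal.ofReal r⁻¹ := rfl
    rw [← Measure.map_apply (by fun_prop) hA, h, k_eq, lintegral_indicator_const measurableSet_Iio,
      Measure.smul_apply, smul_eq_mul, Measure.restrict_restrict hA, Measure.restrict_apply hA,
      Measure.restrict_apply measurableSet_Iio, ← Set.Ioi_inter_Iio]
    congr 2
    tauto_set
  calc (ν ∗ₘ volume.restrict (Set.Ioo 0 1)) A
    _ = ∫⁻ r, volume.restrict (Set.Ioo 0 1) ((r * ·) ⁻¹' A) ∂ν := by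
        rw [Measure.mconv, Measure.map_apply measurable_mul hA,
          Measure.prod_apply (measurable_mul hA)]
        rfl
    _ = ∫⁻ r, ∫⁻ f in A, k r f ∂volume.restrict (Set.Ioi 0) ∂ν :=
        lintegral_congr_ae (hν.mono fun _ => fiber)
    _ = ∫⁻ f in A, ∫⁻ r, k r f ∂ν ∂volume.restrict (Set.Ioi 0) :=
        lintegral_lintegral_swap hk.aemeasurable
    _ = _ := by
        rw [withDensity_apply _ hA]
        simp only [k, lintegral_indicator measurableSet_Ioi]

theorem lintegral_Ioo_inv {a b : ℝ} (ha : 0 < a) (hb : 0 < b) :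
    ∫⁻ r in Set.Ioo a b, ENNReal.ofReal r⁻¹ = ENNReal.ofReal (Real.log (b / a)) := by
  rcases le_total b a with hab | hab
  · rw [Set.Ioo_eq_empty hab.not_gt, Measure.restrict_empty, lintegral_zero_measure,
      ENNReal.ofReal_of_nonpos (Real.log_nonpos (by positivity) ((div_le_one ha).2 hab))]
  have integrable : IntervalIntegrable (fun r : ℝ => r⁻¹) volume a b := by
    refine intervalIntegral.intervalIntegrable_inv (fun r hr => ?_) continuousOn_id
    rw [Set.uIcc_of_le hab] at hr
    exact (ha.trans_le hr.1).ne'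
  rw [← integral_inv_of_pos ha hb, intervalIntegral.integral_of_le hab,
    integral_Ioc_eq_integral_Ioo, ofReal_integral_eq_lintegral_ofReal
    ((intervalIntegrable_iff_integrableOn_Ioo_of_le hab).1 integrable)]
  filter_upwards [ae_restrict_mem measurableSet_Ioo] with r hr
  exact (inv_pos.2 (ha.trans hr.1)).le

section Gaussian

/-- The Gaussian measure with unnormalized Lebesgue density `exp (-‖x‖²)`. It serves as a finite
rotation-invariant measure that factorizes over orthogonal sums. -/
def gaussianVolume (E : Type*) [MeasureSpace E] [Norm E] : Measure E :=
  volume.withDensity fun x => ENNReal.ofReal (Real.exp (-‖x‖ ^ 2))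

variable {E F : Type*} [NormedAddCommGroup E] [InnerProductSpace ℝ E] [FiniteDimensional ℝ E]
  [MeasurableSpace E] [BorelSpace E] [NormedAddCommGroup F] [InnerProductSpace ℝ F]
  [FiniteDimensional ℝ F] [MeasurableSpace F] [BorelSpace F]

theorem lintegral_exp_neg_mul_sq_norm {b : ℝ} (hb : 0 < b) :
    ∫⁻ x : E, ENNReal.ofReal (Real.exp (-b * ‖x‖ ^ 2)) =
      ENNReal.ofReal ((Real.pi / b) ^ (Module.finrank ℝ E / 2 : ℝ)) := by
  have h := GaussianFourier.integral_rexp_neg_mul_sq_norm (V := E) hb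
  have hpos : 0 < (Real.pi / b) ^ (Module.finrank ℝ E / 2 : ℝ) := by positivity
  rw [← h, ofReal_integral_eq_lintegral_ofReal (.of_integral_ne_zero (h ▸ hpos.ne'))]
  exact .of_forall fun _ => (Real.exp_pos _).le

theorem lintegral_exp_neg_mul_sq_norm_gaussianVolume {c : ℝ} (hc : 0 < 1 + c) :
    ∫⁻ x, ENNReal.ofReal (Real.exp (-c * ‖x‖ ^ 2)) ∂gaussianVolume E =
      ENNReal.ofReal ((Real.pi / (1 + c)) ^ (Module.finrank ℝ E / 2 : ℝ)) := by
  rw [gaussianVolume, lintegral_withDensity_eq_lintegral_mul _ (by fun_prop) (by fun_prop),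
    ← lintegral_exp_neg_mul_sq_norm hc]
  refine lintegral_congr fun x => ?_
  rw [Pi.mul_apply, ← ENNReal.ofReal_mul (Real.exp_pos _).le, ← Real.exp_add]
  ring_nf

theorem gaussianVolume_univ :
    gaussianVolume E Set.univ = ENNReal.ofReal (Real.pi ^ (Module.finrank ℝ E / 2 : ℝ)) := by
  simpa using lintegral_exp_neg_mul_sq_norm_gaussianVolume (E := E) (c := 0) (by simp)

instance : IsFiniteMeasure (gaussianVolume E) :=
  ⟨gaussianVolume_univ (E := E) ▸ ENNReal.ofReal_lt_top⟩

theorem map_gaussianVolume (e : E ≃ₗᵢ[ℝ] F) :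
    (gaussianVolume E).map e = gaussianVolume F := by
  simpa [gaussianVolume, Function.comp_def] using
    map_withDensity_comp_of_measurePreserving e.measurePreserving
      (g := fun x => ENNReal.ofReal (Real.exp (-‖x‖ ^ 2))) (by fun_prop)

theorem gaussianVolume_prod :
    ((gaussianVolume E).prod (gaussianVolume F)).map (WithLp.toLp 2) =
      gaussianVolume (WithLp 2 (E × F)) := by
  rw [gaussianVolume, gaussianVolume, prod_withDensity (by fun_prop) (by fun_prop),
    gaussianVolume, ← map_withDensity_comp_of_measurePreserving
      (WithLp.volume_preserving_toLp E F) (by fun_prop), Measure.volume_eq_prod]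
  congr 2 with p
  rw [← ENNReal.ofReal_mul (Real.exp_pos _).le, ← Real.exp_add, ← neg_add,
    Function.comp_apply, WithLp.prod_norm_sq_eq_of_L2, WithLp.toLp_fst, WithLp.toLp_snd]

theorem lintegral_comp_sq_norm_complex {g : ℝ → ENNReal} (hg : Measurable g) :
    ∫⁻ z : ℂ, g (‖z‖ ^ 2) = ENNReal.ofReal Real.pi * ∫⁻ t in Set.Ioi 0, g t := by
  have image_sq : (fun r : ℝ => r ^ 2) '' Set.Ioi 0 = Set.Ioi 0 := by
    ext t
    refine ⟨?_, fun ht => ⟨√t, Real.sqrt_pos.2 ht, Real.sq_sqrt (le_of_lt ht)⟩⟩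
    rintro ⟨r, hr : 0 < r, rfl⟩
    exact pow_pos hr 2
  have subst_sq : ∫⁻ t in Set.Ioi 0, g t =
      ∫⁻ r in Set.Ioi 0, ENNReal.ofReal |2 * r| * g (r ^ 2) := by
    conv_lhs => rw [← image_sq]
    exact lintegral_image_eq_lintegral_abs_deriv_mul measurableSet_Ioi
      (fun r _ => by simpa using (hasDerivAt_pow 2 r).hasDerivWithinAt)
      (fun r hr s hs h => (sq_eq_sq₀ (le_of_lt hr) (le_of_lt hs)).1 h) g
  rw [subst_sq, ← Complex.lintegral_comp_polarCoord_symm, polarCoord_target,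
    Measure.volume_eq_prod, ← Measure.prod_restrict]
  simp only [Complex.norm_polarCoord_symm, sq_abs, smul_eq_mul]
  rw [lintegral_prod _ (by fun_prop), ← lintegral_const_mul _ (by fun_prop)]
  refine setLIntegral_congr_fun measurableSet_Ioi fun r (hr : 0 < r) => ?_
  simp only [lintegral_const, Measure.restrict_apply MeasurableSet.univ, Set.univ_inter,
    Real.volume_Ioo]
  rw [abs_of_pos (by positivity), mul_right_comm, ← mul_assoc, ← ENNReal.ofReal_mul hr.le,
    ← ENNReal.ofReal_mul Real.pi_pos.le]
  ring_nf

theorem gaussianVolume_complex_lt_sq_norm {r : ℝ} (hr : 0 ≤ r) :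
    gaussianVolume ℂ {z | r < ‖z‖ ^ 2} = ENNReal.ofReal (Real.pi * Real.exp (-r)) := by
  have hm : MeasurableSet {z : ℂ | r < ‖z‖ ^ 2} := measurableSet_lt (by fun_prop) (by fun_prop)
  calc gaussianVolume ℂ {z | r < ‖z‖ ^ 2}
      = ∫⁻ z : ℂ, (Set.Ioi r).indicator (fun t => ENNReal.ofReal (Real.exp (-t))) (‖z‖ ^ 2) := by
        rw [gaussianVolume, withDensity_apply _ hm, ← lintegral_indicator hm]
        rfl
    _ = ENNReal.ofReal Real.pi * ∫⁻ t in Set.Ioi r, ENNReal.ofReal (Real.exp (-t)) := by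
        rw [lintegral_comp_sq_norm_complex (.indicator (by fun_prop) measurableSet_Ioi),
          lintegral_indicator measurableSet_Ioi, Measure.restrict_restrict measurableSet_Ioi,
          Set.inter_eq_left.2 (Set.Ioi_subset_Ioi hr)]
    _ = ENNReal.ofReal (Real.pi * Real.exp (-r)) := by
        rw [← ofReal_integral_eq_lintegral_ofReal (integrableOn_exp_neg_Ioi r)
          (.of_forall fun _ => (Real.exp_pos _).le), integral_exp_neg_Ioi,
          ENNReal.ofReal_mul Real.pi_pos.le]

theorem gaussianVolume_mul_sq_norm_lt_sq_norm_fst {u : ℝ} (hu : u ∈ Set.Ico (0 : ℝ) 1) :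
    gaussianVolume (WithLp 2 (ℂ × E)) {x | u * ‖x‖ ^ 2 < ‖x.fst‖ ^ 2} =
      ENNReal.ofReal (Real.pi * (Real.pi * (1 - u)) ^ (Module.finrank ℝ E / 2 : ℝ)) := by
  have hu' : 0 < 1 - u := sub_pos.2 hu.2
  have hc : 0 ≤ u / (1 - u) := div_nonneg hu.1 hu'.le
  have hm : MeasurableSet {x : WithLp 2 (ℂ × E) | u * ‖x‖ ^ 2 < ‖x.fst‖ ^ 2} :=
    measurableSet_lt (by fun_prop) (by fun_prop)
  have fiber (y : E) : {z : ℂ | WithLp.toLp 2 (z, y) ∈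
      {x : WithLp 2 (ℂ × E) | u * ‖x‖ ^ 2 < ‖x.fst‖ ^ 2}} =
        {z | u / (1 - u) * ‖y‖ ^ 2 < ‖z‖ ^ 2} := by
    ext z
    simp only [Set.mem_ofPred_eq, WithLp.prod_norm_sq_eq_of_L2, WithLp.toLp_fst, WithLp.toLp_snd,
      div_mul_eq_mul_div, div_lt_iff₀ hu']
    constructor <;> intro h <;> linarith
  calc gaussianVolume (WithLp 2 (ℂ × E)) {x | u * ‖x‖ ^ 2 < ‖x.fst‖ ^ 2}
      = ∫⁻ y, gaussianVolume ℂ {z | u / (1 - u) * ‖y‖ ^ 2 < ‖z‖ ^ 2} ∂gaussianVolume E := by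
        rw [← gaussianVolume_prod, Measure.map_apply (by fun_prop) hm,
          Measure.prod_apply_symm ((by fun_prop : Measurable (WithLp.toLp 2)) hm)]
        simp_rw [← fiber]
        rfl
    _ = ENNReal.ofReal Real.pi *
          ∫⁻ y, ENNReal.ofReal (Real.exp (-(u / (1 - u)) * ‖y‖ ^ 2)) ∂gaussianVolume E := by
        rw [← lintegral_const_mul' _ _ ENNReal.ofReal_ne_top]
        refine lintegral_congr fun y => ?_
        rw [gaussianVolume_complex_lt_sq_norm (mul_nonneg hc (sq_nonneg _)),
          ENNReal.ofReal_mul Real.pi_pos.le, neg_mul]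
    _ = ENNReal.ofReal (Real.pi * (Real.pi * (1 - u)) ^ (Module.finrank ℝ E / 2 : ℝ)) := by
        rw [lintegral_exp_neg_mul_sq_norm_gaussianVolume (by positivity),
          ← ENNReal.ofReal_mul Real.pi_pos.le]
        congr 3
        field_simp
        ring

end Gaussian

section UnitaryGroup

variable {n : Type*} [Fintype n] [DecidableEq n]

instance : LocallyCompactSpace (Matrix.unitaryGroup n ℂ) :=
  have : LocallyCompactSpace (Matrix n n ℂ) := inferInstanceAs (LocallyCompactSpace (n → n → ℂ))
  (isClosed_unitary (R := Matrix n n ℂ)).isClosedEmbedding_subtypeVal.locallyCompactSpace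

@[fun_prop]
theorem measurable_unitaryGroup_apply {α : Type*} [MeasurableSpace α]
    {U : α → Matrix.unitaryGroup n ℂ} (hU : Measurable U) (i j : n) :
    Measurable fun a => (U a : Matrix n n ℂ) i j :=
  (continuous_subtype_val.matrix_elem i j).measurable.comp hU

@[fun_prop]
theorem measurable_unitaryGroup_mulVec_apply {α : Type*} [MeasurableSpace α]
    {U : α → Matrix.unitaryGroup n ℂ} {x : α → n → ℂ} (hU : Measurable U) (hx : Measurable x)
    (i : n) : Measurable fun a => ((U a : Matrix n n ℂ) *ᵥ x a) i := by
  simp only [Matrix.mulVec, dotProduct]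
  fun_prop

theorem sum_sq_norm_unitaryGroup_row (U : Matrix.unitaryGroup n ℂ) (i : n) :
    ∑ j, ‖(U : Matrix n n ℂ) i j‖ ^ 2 = 1 := by
  have h : ((U : Matrix n n ℂ) * star (U : Matrix n n ℂ)) i i = 1 := by
    rw [Matrix.mem_unitaryGroup_iff.1 U.2, Matrix.one_apply_eq]
  simp only [Matrix.mul_apply, Matrix.star_apply, Complex.star_def, Complex.mul_conj'] at h
  exact_mod_cast h

theorem exists_unitaryGroup_col_eq (x : EuclideanSpace ℂ n) (j : n) :
    ∃ V : Matrix.unitaryGroup n ℂ, ∀ k, x k = ‖x‖ * (V : Matrix n n ℂ) k j := by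
  rcases eq_or_ne x 0 with rfl | hx
  · exact ⟨1, by simp⟩
  have unit : Orthonormal ℂ (({j} : Set n).domRestrict fun _ => (‖x‖⁻¹ : ℂ) • x) :=
    ⟨fun _ => by simp [norm_smul, hx], fun a b hab => (hab (Subsingleton.elim a b)).elim⟩
  obtain ⟨b, hb⟩ := unit.exists_orthonormalBasis_extension_of_card_eq finrank_euclideanSpace
  refine ⟨⟨_, (EuclideanSpace.basisFun n ℂ).toMatrix_orthonormalBasis_mem_unitary b⟩, fun k => ?_⟩
  simp [Module.Basis.toMatrix_apply, hb j rfl, hx]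

theorem exists_linearIsometryEquiv_eq_mulVec (U : Matrix.unitaryGroup n ℂ) :
    ∃ e : EuclideanSpace ℂ n ≃ₗᵢ[ℝ] EuclideanSpace ℂ n,
      ∀ x, (e x).ofLp = (U : Matrix n n ℂ) *ᵥ x.ofLp := by
  let e := Unitary.linearIsometryEquiv
    ⟨Matrix.toEuclideanCLM (𝕜 := ℂ) (n := n) (U : Matrix n n ℂ), Unitary.map_mem _ U.2⟩
  exact ⟨⟨e.toLinearEquiv.restrictScalars ℝ, e.norm_map⟩, fun _ => rfl⟩

theorem map_sq_norm_mulVec_apply (μ : Measure (Matrix.unitaryGroup n ℂ)) [μ.IsMulRightInvariant]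
    (x : EuclideanSpace ℂ n) (i j : n) :
    μ.map (fun U : Matrix.unitaryGroup n ℂ => ‖((U : Matrix n n ℂ) *ᵥ x.ofLp) i‖ ^ 2) =
      μ.map (fun U : Matrix.unitaryGroup n ℂ => ‖x‖ ^ 2 * ‖(U : Matrix n n ℂ) i j‖ ^ 2) := by
  obtain ⟨V, hV⟩ := exists_unitaryGroup_col_eq x j
  have mulVec_eq (U : Matrix.unitaryGroup n ℂ) :
      ((U : Matrix n n ℂ) *ᵥ x.ofLp) i =
        ‖x‖ * ((U * V : Matrix.unitaryGroup n ℂ) : Matrix n n ℂ) i j := by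
    simp only [Matrix.mulVec, dotProduct, hV, Submonoid.coe_mul, Matrix.mul_apply, Finset.mul_sum]
    exact Finset.sum_congr rfl fun k _ => by ring
  conv_rhs => rw [← map_mul_right_eq_self μ V]
  rw [Measure.map_map (by fun_prop) (by fun_prop)]
  simp [Function.comp_def, mulVec_eq, mul_pow]

theorem gaussianVolume_univ_smul_map_sq_norm_apply (μ : Measure (Matrix.unitaryGroup n ℂ))
    [IsProbabilityMeasure μ] [μ.IsMulRightInvariant] (i j : n) :
    gaussianVolume (EuclideanSpace ℂ n) Set.univ •
        μ.map (fun U : Matrix.unitaryGroup n ℂ => ‖(U : Matrix n n ℂ) i j‖ ^ 2) =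
      (gaussianVolume (EuclideanSpace ℂ n)).map (fun x => ‖x i‖ ^ 2 / ‖x‖ ^ 2) := by
  have : Nonempty n := ⟨i⟩
  let G := gaussianVolume (EuclideanSpace ℂ n)
  let Φ : EuclideanSpace ℂ n × Matrix.unitaryGroup n ℂ → ℝ := fun p =>
    ‖((p.2 : Matrix n n ℂ) *ᵥ p.1.ofLp) i‖ ^ 2 / ‖p.1‖ ^ 2
  have hΦ : Measurable Φ := by fun_prop
  have fixed_vector : ∀ᵐ x ∂G, μ.map (fun U => Φ (x, U)) =
      μ.map (fun U : Matrix.unitaryGroup n ℂ => ‖(U : Matrix n n ℂ) i j‖ ^ 2) := by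
    have G_ac_volume : G ≪ volume := withDensity_absolutelyContinuous _ _
    filter_upwards [G_ac_volume.ae_le (Measure.ae_ne volume 0)] with x hx
    have h := congrArg (Measure.map (· / ‖x‖ ^ 2)) (map_sq_norm_mulVec_apply μ x i j)
    rw [Measure.map_map (by fun_prop) (by fun_prop),
      Measure.map_map (by fun_prop) (by fun_prop)] at h
    simpa [Function.comp_def, hx] using h
  have fixed_unitary (U : Matrix.unitaryGroup n ℂ) :
      G.map (fun x => Φ (x, U)) = G.map (fun x => ‖x i‖ ^ 2 / ‖x‖ ^ 2) := by
    obtain ⟨e, he⟩ := exists_linearIsometryEquiv_eq_mulVec U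
    have hG : G.map e = G := map_gaussianVolume e
    conv_rhs => rw [← hG, Measure.map_map (by fun_prop) (by fun_prop)]
    simp only [Φ, Function.comp_def, he, e.norm_map]
  calc G Set.univ • μ.map (fun U : Matrix.unitaryGroup n ℂ => ‖(U : Matrix n n ℂ) i j‖ ^ 2)
    _ = (G.prod μ).map ((fun U : Matrix.unitaryGroup n ℂ => ‖(U : Matrix n n ℂ) i j‖ ^ 2) ∘
          Prod.snd) := by
        rw [← Measure.map_map (by fun_prop) measurable_snd, Measure.map_snd_prod, Measure.map_smul]
    _ = (G.prod μ).map Φ := (map_prod_congr hΦ (by fun_prop) fixed_vector).symm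
    _ = (μ.prod G).map (Φ ∘ Prod.swap) := by
        rw [← Measure.map_map hΦ measurable_swap, Measure.prod_swap]
    _ = (μ.prod G).map ((fun x => ‖x i‖ ^ 2 / ‖x‖ ^ 2) ∘ Prod.snd) :=
        map_prod_congr (hΦ.comp measurable_swap) (by fun_prop) (.of_forall fixed_unitary)
    _ = G.map (fun x => ‖x i‖ ^ 2 / ‖x‖ ^ 2) := by
        rw [← Measure.map_map (by fun_prop) measurable_snd, Measure.map_snd_prod, measure_univ,
          one_smul]

theorem exists_linearIsometryEquiv_fst_eq_apply {m : ℕ} (i : Fin (m + 1)) :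
    ∃ e : EuclideanSpace ℂ (Fin (m + 1)) ≃ₗᵢ[ℝ] WithLp 2 (ℂ × EuclideanSpace ℂ (Fin m)),
      ∀ x, (e x).fst = x i := by
  let e : EuclideanSpace ℂ (Fin (m + 1)) →ₗᵢ[ℝ] WithLp 2 (ℂ × EuclideanSpace ℂ (Fin m)) :=
    { toFun x := WithLp.toLp 2 (x i, WithLp.toLp 2 fun k => x (i.succAbove k))
      map_add' _ _ := rfl
      map_smul' _ _ := rfl
      norm_map' x := by
        rw [← sq_eq_sq₀ (norm_nonneg _) (norm_nonneg _), EuclideanSpace.norm_sq_eq,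
          Fin.sum_univ_succAbove _ i, WithLp.prod_norm_sq_eq_of_L2, EuclideanSpace.norm_sq_eq]
        rfl }
  have finrank_eq : Module.finrank ℝ (EuclideanSpace ℂ (Fin (m + 1))) =
      Module.finrank ℝ (WithLp 2 (ℂ × EuclideanSpace ℂ (Fin m))) := by
    rw [(WithLp.linearEquiv 2 ℝ (ℂ × EuclideanSpace ℂ (Fin m))).finrank_eq, Module.finrank_prod]
    simp only [finrank_real_of_complex, finrank_euclideanSpace_fin, Module.finrank_self]
    ring
  exact ⟨e.toLinearIsometryEquiv finrank_eq, fun _ => rfl⟩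

theorem gaussianVolume_lt_sq_norm_apply_div_sq_norm {m : ℕ} (i : Fin (m + 1)) {u : ℝ}
    (hu : u ∈ Set.Ico (0 : ℝ) 1) :
    gaussianVolume (EuclideanSpace ℂ (Fin (m + 1))) {x | u < ‖x i‖ ^ 2 / ‖x‖ ^ 2} =
      ENNReal.ofReal (Real.pi ^ (m + 1) * (1 - u) ^ m) := by
  obtain ⟨e, he⟩ := exists_linearIsometryEquiv_fst_eq_apply i
  have lt_div_iff (x : EuclideanSpace ℂ (Fin (m + 1))) :
      u < ‖x i‖ ^ 2 / ‖x‖ ^ 2 ↔ u * ‖e x‖ ^ 2 < ‖(e x).fst‖ ^ 2 := by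
    rw [he, e.norm_map]
    rcases eq_or_ne x 0 with rfl | hx
    · simp [hu.1]
    · exact lt_div_iff₀ (by positivity)
  calc gaussianVolume (EuclideanSpace ℂ (Fin (m + 1))) {x | u < ‖x i‖ ^ 2 / ‖x‖ ^ 2}
    _ = (gaussianVolume _).map e {y | u * ‖y‖ ^ 2 < ‖y.fst‖ ^ 2} := by
        rw [Measure.map_apply (by fun_prop) (measurableSet_lt (by fun_prop) (by fun_prop))]
        simp only [lt_div_iff]
        rfl
    _ = ENNReal.ofReal (Real.pi ^ (m + 1) * (1 - u) ^ m) := by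
        rw [map_gaussianVolume, gaussianVolume_mul_sq_norm_lt_sq_norm_fst hu,
          finrank_real_of_complex]
        simp [mul_pow, pow_succ', mul_assoc]

theorem measure_lt_sq_norm_unitaryGroup_apply {m : ℕ}
    (μ : Measure (Matrix.unitaryGroup (Fin (m + 1)) ℂ)) [IsProbabilityMeasure μ]
    [μ.IsMulRightInvariant] (i j : Fin (m + 1)) {u : ℝ} (hu : u ∈ Set.Ico (0 : ℝ) 1) :
    μ {U | u < ‖(U : Matrix (Fin (m + 1)) (Fin (m + 1)) ℂ) i j‖ ^ 2} =
      ENNReal.ofReal ((1 - u) ^ m) := by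
  have pi_pow_pos : 0 < Real.pi ^ (m + 1) := by positivity
  have gaussian_mass : gaussianVolume (EuclideanSpace ℂ (Fin (m + 1))) Set.univ =
      ENNReal.ofReal (Real.pi ^ (m + 1)) := by
    rw [gaussianVolume_univ, finrank_real_of_complex, finrank_euclideanSpace_fin,
      ← Real.rpow_natCast]
    simp
  have tail_eq := congrArg (· (Set.Ioi u)) (gaussianVolume_univ_smul_map_sq_norm_apply μ i j)
  simp only [Measure.smul_apply, smul_eq_mul] at tail_eq
  rw [Measure.map_apply (by fun_prop) measurableSet_Ioi,
    Measure.map_apply (by fun_prop) measurableSet_Ioi, gaussian_mass] at tail_eq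
  refine (ENNReal.mul_right_inj (ENNReal.ofReal_pos.2 pi_pow_pos).ne' ENNReal.ofReal_ne_top).1 ?_
  rw [← ENNReal.ofReal_mul pi_pow_pos.le, ← gaussianVolume_lt_sq_norm_apply_div_sq_norm i hu]
  exact tail_eq

theorem map_sq_norm_unitaryGroup_two_apply (μ : Measure (Matrix.unitaryGroup (Fin 2) ℂ))
    [IsProbabilityMeasure μ] [μ.IsMulRightInvariant] (i j : Fin 2) :
    μ.map (fun U : Matrix.unitaryGroup (Fin 2) ℂ => ‖(U : Matrix (Fin 2) (Fin 2) ℂ) i j‖ ^ 2) =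
      volume.restrict (Set.Ioo 0 1) := by
  have : IsProbabilityMeasure (μ.map fun U : Matrix.unitaryGroup (Fin 2) ℂ =>
      ‖(U : Matrix (Fin 2) (Fin 2) ℂ) i j‖ ^ 2) :=
    Measure.isProbabilityMeasure_map (Measurable.aemeasurable (by fun_prop))
  refine eq_restrict_volume_Ioo_zero_one fun u hu => ?_
  rw [Measure.map_apply (by fun_prop) measurableSet_Ioi]
  exact (measure_lt_sq_norm_unitaryGroup_apply (m := 1) μ i j hu).trans (by rw [pow_one])

theorem map_sum_mul_sq_norm_unitaryGroup_two_row (μ : Measure (Matrix.unitaryGroup (Fin 2) ℂ))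
    [IsProbabilityMeasure μ] [μ.IsMulRightInvariant] {a : Fin 2 → ℝ} (ha : a 1 < a 0)
    (i : Fin 2) :
    μ.map (fun U : Matrix.unitaryGroup (Fin 2) ℂ =>
        ∑ l, a l * ‖(U : Matrix (Fin 2) (Fin 2) ℂ) i l‖ ^ 2) =
      ENNReal.ofReal (a 0 - a 1)⁻¹ • volume.restrict (Set.Ioo (a 1) (a 0)) := by
  have affine (U : Matrix.unitaryGroup (Fin 2) ℂ) :
      ∑ l, a l * ‖(U : Matrix (Fin 2) (Fin 2) ℂ) i l‖ ^ 2 =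
        a 1 + (a 0 - a 1) * ‖(U : Matrix (Fin 2) (Fin 2) ℂ) i 0‖ ^ 2 := by
    have row_norm := sum_sq_norm_unitaryGroup_row U i
    rw [Fin.sum_univ_two] at row_norm ⊢
    linear_combination a 1 * row_norm
  have h := map_const_add_mul_restrict_volume_Ioo_zero_one (a 1) (sub_pos.2 ha)
  rw [← map_sq_norm_unitaryGroup_two_apply μ i 0, Measure.map_map (by fun_prop) (by fun_prop),
    add_sub_cancel] at h
  simpa only [affine, Function.comp_def] using h

end UnitaryGroup

section Fidelity

theorem ofReal_fidDensity_of_pos {γ f : ℝ} (hγ : 0 < γ) (hf : 0 < f) :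
    ENNReal.ofReal (fidDensity γ f) = ENNReal.ofReal γ⁻¹ *
      ENNReal.ofReal (Real.log ((1 + γ) / 2 / max f ((1 - γ) / 2))) := by
  rw [← ENNReal.ofReal_mul (inv_pos.2 hγ).le, fidDensity]
  split_ifs with h₁ h₂
  · rw [max_eq_right h₁.2, one_div, div_div_div_cancel_right₀ two_ne_zero]
  · rw [max_eq_left h₂.1.le, one_div, div_div]
  · have hlo : (1 - γ) / 2 < f := not_le.1 fun h => h₁ ⟨hf.le, h⟩
    have hhi : (1 + γ) / 2 < f := not_le.1 fun h => h₂ ⟨hlo, h⟩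
    have log_nonpos : Real.log ((1 + γ) / 2 / f) ≤ 0 :=
      Real.log_nonpos (by positivity) ((div_le_one hf).2 hhi.le)
    rw [max_eq_left hlo.le, ENNReal.ofReal_zero, ENNReal.ofReal_of_nonpos
      (mul_nonpos_of_nonneg_of_nonpos (inv_pos.2 hγ).le log_nonpos)]

theorem fidDensity_of_neg {γ f : ℝ} (hγ : γ ≤ 1) (hf : f < 0) : fidDensity γ f = 0 := by
  rw [fidDensity, if_neg (by grind), if_neg (by grind)]

theorem withDensity_fidDensity {γ : ℝ} (hγ : γ ∈ Set.Ioc (0 : ℝ) 1) :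
    volume.withDensity (fun f => ENNReal.ofReal (fidDensity γ f)) =
      (ENNReal.ofReal γ⁻¹ • volume.restrict (Set.Ioo ((1 - γ) / 2) ((1 + γ) / 2))) ∗ₘ
        volume.restrict (Set.Ioo 0 1) := by
  have ⟨hγ0, hγ1⟩ := hγ
  have support_pos : ∀ᵐ r ∂ENNReal.ofReal γ⁻¹ •
      volume.restrict (Set.Ioo ((1 - γ) / 2) ((1 + γ) / 2)), 0 < r := by
    refine Measure.ae_smul_measure ?_ _
    filter_upwards [ae_restrict_mem measurableSet_Ioo] with r hr
    linarith [hr.1]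
  rw [mconv_restrict_volume_Ioo_zero_one support_pos, ← withDensity_indicator measurableSet_Ioi]
  refine withDensity_congr_ae ?_
  filter_upwards [Measure.ae_ne volume 0] with f hf
  rcases hf.lt_or_gt with hf | hf
  · rw [fidDensity_of_neg hγ1 hf, ENNReal.ofReal_zero,
      Set.indicator_of_notMem (Set.notMem_Ioi.2 hf.le)]
  · rw [ofReal_fidDensity_of_pos hγ0 hf, Set.indicator_of_mem (Set.mem_Ioi.2 hf),
      Measure.restrict_smul, lintegral_smul_measure, smul_eq_mul,
      Measure.restrict_restrict measurableSet_Ioi, ← Set.Ioi_inter_Iio, ← Set.inter_assoc,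
      Set.Ioi_inter_Ioi, Set.Ioi_inter_Iio,
      lintegral_Ioo_inv (lt_max_of_lt_left hf) (by positivity)]

variable {d : ℕ}

theorem bipInner_single_kronAct_schmidtVec (A B : Matrix (Fin d) (Fin d) ℂ) (s : Fin d → ℝ)
    (i k : Fin d) :
    bipInner (fun p => if p = (i, k) then 1 else 0) (kronAct A B (schmidtVec s)) =
      (B *ᵥ fun l => s l * A i l) k := by
  simp only [bipInner, kronAct, schmidtVec, Fintype.sum_prod_type, Matrix.mulVec, dotProduct,
    Prod.mk.injEq, ite_and, apply_ite conj]
  simp [mul_comm, mul_left_comm]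

theorem map_sq_norm_bipInner_single_kronAct_schmidtVec
    (μ ν : Measure (Matrix.unitaryGroup (Fin d) ℂ)) [SFinite μ] [SFinite ν]
    [ν.IsMulRightInvariant] (s : Fin d → ℝ) (i j k : Fin d) :
    (μ.prod ν).map (fun UV : Matrix.unitaryGroup (Fin d) ℂ × Matrix.unitaryGroup (Fin d) ℂ =>
        ‖bipInner (fun p => if p = (i, k) then (1 : ℂ) else 0)
          (kronAct (UV.1 : Matrix (Fin d) (Fin d) ℂ) (UV.2 : Matrix (Fin d) (Fin d) ℂ)
            (schmidtVec s))‖ ^ 2) =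
      (μ.map fun U : Matrix.unitaryGroup (Fin d) ℂ =>
          ∑ l, s l ^ 2 * ‖(U : Matrix (Fin d) (Fin d) ℂ) i l‖ ^ 2) ∗ₘ
        ν.map fun V : Matrix.unitaryGroup (Fin d) ℂ =>
          ‖(V : Matrix (Fin d) (Fin d) ℂ) k j‖ ^ 2 := by
  rw [Measure.mconv, Measure.map_prod_map _ _ (by fun_prop) (by fun_prop),
    Measure.map_map (by fun_prop) (by fun_prop)]
  simp only [bipInner_single_kronAct_schmidtVec]
  refine map_prod_congr (by fun_prop) (by fun_prop) (.of_forall fun U => ?_)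
  have h := map_sq_norm_mulVec_apply ν
    (WithLp.toLp 2 fun l => s l * (U : Matrix (Fin d) (Fin d) ℂ) i l) k j
  simpa [EuclideanSpace.norm_sq_eq, mul_pow] using h

end Fidelity

/-- For `γ ∈ (0,1]`, the fidelity `|⟨e₀ ⊗ e₀, (U_a ⊗ U_b) I_s⟩|²` of a
Haar-random locally rotated two-qubit state with Schmidt coefficients
`(√((1+γ)/2), √((1-γ)/2))` with respect to the product state `e₀ ⊗ e₀` has probability
density `fidDensity γ` with respect to Lebesgue measure. -/
theorem qubit_fidelity_density (γ : ℝ) (hγ : γ ∈ Set.Ioc (0 : ℝ) 1)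
    (μ : Measure (Matrix.unitaryGroup (Fin 2) ℂ))
    [IsProbabilityMeasure μ] [μ.IsHaarMeasure] :
    Measure.map (fun UV : Matrix.unitaryGroup (Fin 2) ℂ × Matrix.unitaryGroup (Fin 2) ℂ =>
        ‖bipInner (fun p : Fin 2 × Fin 2 => if p = (0, 0) then (1 : ℂ) else 0)
          (kronAct (UV.1 : Matrix (Fin 2) (Fin 2) ℂ) (UV.2 : Matrix (Fin 2) (Fin 2) ℂ)
            (schmidtVec ![Real.sqrt ((1 + γ) / 2), Real.sqrt ((1 - γ) / 2)]))‖ ^ 2)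
        (μ.prod μ)
      = volume.withDensity (fun f : ℝ => ENNReal.ofReal (fidDensity γ f)) := by
  have := isMulRightInvariant_of_isProbabilityMeasure μ
  let s : Fin 2 → ℝ := ![√((1 + γ) / 2), √((1 - γ) / 2)]
  have s_zero_sq : s 0 ^ 2 = (1 + γ) / 2 := Real.sq_sqrt (by linarith [hγ.1])
  have s_one_sq : s 1 ^ 2 = (1 - γ) / 2 := Real.sq_sqrt (by linarith [hγ.2])
  have s_sq_sub : s 0 ^ 2 - s 1 ^ 2 = γ := by rw [s_zero_sq, s_one_sq]; ring
  have s_sq_lt : s 1 ^ 2 < s 0 ^ 2 := by linarith [hγ.1]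
  rw [map_sq_norm_bipInner_single_kronAct_schmidtVec μ μ s 0 0 0,
    map_sum_mul_sq_norm_unitaryGroup_two_row (a := fun l => s l ^ 2) μ s_sq_lt,
    map_sq_norm_unitaryGroup_two_apply, s_sq_sub, s_zero_sq, s_one_sq, withDensity_fidDensity hγ]
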